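/- arXiv:0810.2318 — 2 statements merged into one kernel-verified Lean document; each statement's English description precedes it below -/
import Mathlib

section
/- Let Λ = ℤ_p[[T₁,…,T_d]] and let M be a finitely generated torsion Λ-module. Then Ext^1_Λ(M, Λ) has no nonzero pseudo-null Λ-submodule. -/
open CategoryTheory

/-- `extModule R M N n` is the `n`-th Ext group `Ext^n_R(M, N)` in the category of
`R`-modules. -/
noncomputable def extModule (R : Type) [CommRing R] (M N : Type) [AddCommGroup M] [Module R M]
    [AddCommGroup N] [Module R N] (n : ℕ) : ModuleCat R :=
  ((Ext R (ModuleCat R) n).obj (Opposite.op (ModuleCat.of R M))).obj (ModuleCat.of R N)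

/-- A module over a commutative ring is pseudo-null if its localization at every prime
of height at most one vanishes. -/
def IsPseudoNull (R : Type) [CommRing R] (M : Type) [AddCommGroup M] [Module R M] : Prop :=
  ∀ (P : Ideal R) (hP : P.IsPrime), Order.height (⟨P, hP⟩ : PrimeSpectrum R) ≤ 1 →
    Subsingleton (LocalizedModule P.primeCompl M)


/-- Elementwise form of complete integral closedness. -/
def CIC (R : Type*) [CommRing R] : Prop :=
  ∀ f g r : R, f ≠ 0 → r ≠ 0 → (∀ n : ℕ, f ^ n ∣ r * g ^ n) → f ∣ g

theorem CIC.of_valuationRing (R : Type*) [CommRing R] [IsDomain R] [ValuationRing R]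
    [IsNoetherianRing R] : CIC R := by
  intro f g r hf hr h
  rcases ValuationRing.dvd_total f g with h1 | ⟨t, rfl⟩
  · exact h1
  have hg : g ≠ 0 := left_ne_zero_of_mul hf
  by_cases ht : IsUnit t
  · obtain ⟨u, rfl⟩ := ht
    exact ⟨↑u⁻¹, by simp⟩
  · exfalso
    have hfin : FiniteMultiplicity t r := FiniteMultiplicity.of_not_isUnit ht hr
    obtain ⟨n, hn⟩ := hfin
    apply hn
    have := h (n + 1)
    rw [mul_pow, mul_comm r] at this
    exact (mul_dvd_mul_iff_left (pow_ne_zero _ hg)).1 this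

theorem CIC.of_equiv {R S : Type*} [CommRing R] [CommRing S] (e : R ≃+* S) (h : CIC R) :
    CIC S := by
  intro f g r hf hr H
  have := h (e.symm f) (e.symm g) (e.symm r) (by simpa using hf) (by simpa using hr) (fun n => by
    have := map_dvd e.symm (H n)
    simpa using this)
  simpa using map_dvd e this

open PowerSeries in
theorem CIC.powerSeries_aux {R : Type*} [CommRing R] [IsDomain R] (h : CIC R)
    (f g r : R⟦X⟧) (hf : constantCoeff f ≠ 0) (hr : constantCoeff r ≠ 0)
    (H : ∀ n : ℕ, f ^ n ∣ r * g ^ n) : f ∣ g := by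
  have cop : ∀ n (k : ℕ) (x : R⟦X⟧), f ^ n ∣ X ^ k * x → f ^ n ∣ x := by
    intro n k x hx
    obtain ⟨y, hy⟩ := hx
    have h1 : (X : R⟦X⟧) ^ k ∣ f ^ n * y := ⟨x, hy.symm⟩
    have h2 : (X : R⟦X⟧) ^ k ∣ y := by
      refine X_prime.pow_dvd_of_dvd_mul_left k ?_ h1
      rw [X_dvd_iff, map_pow]
      exact pow_ne_zero _ hf
    obtain ⟨z, rfl⟩ := h2
    refine ⟨z, mul_left_cancel₀ (pow_ne_zero k (X_ne_zero (R := R))) ?_⟩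
    rw [hy]; ring
  have step : ∀ u : {u : R⟦X⟧ // ∀ n : ℕ, f ^ n ∣ r * u ^ n},
      ∃ (c : R) (v : {u : R⟦X⟧ // ∀ n : ℕ, f ^ n ∣ r * u ^ n}), u.1 = C c * f + X * v.1 := by
    rintro ⟨u, hu⟩
    obtain ⟨c, hc⟩ := h (constantCoeff f) (constantCoeff u) (constantCoeff r) hf hr (fun n => by
      simpa using map_dvd (constantCoeff (R := R)) (hu n))
    have hX : (X : R⟦X⟧) ∣ u - C c * f := by
      rw [X_dvd_iff]; simp [hc]; ring
    obtain ⟨v, hv⟩ := hX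
    refine ⟨c, ⟨v, fun n => ?_⟩, by rw [← hv]; ring⟩
    apply cop n n
    have : X ^ n * (r * v ^ n) = r * (u + (- (C c * f))) ^ n := by
      rw [← sub_eq_add_neg, hv]; ring
    rw [this, add_pow, Finset.mul_sum]
    refine Finset.dvd_sum fun i hi => ?_
    have hi' : i ≤ n := by simpa [Nat.lt_succ_iff] using hi
    obtain ⟨w, hw⟩ := hu i
    refine ⟨w * (- C c) ^ (n - i) * (n.choose i : R⟦X⟧), ?_⟩
    have e1 : f ^ n = f ^ i * f ^ (n - i) := by rw [← pow_add]; congr 1; omega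
    have e2 : (-(C c * f)) ^ (n - i) = (- C c) ^ (n - i) * f ^ (n - i) := by
      rw [← mul_pow]; congr 1; ring
    rw [e1, e2]
    linear_combination (((- C c) ^ (n - i) * f ^ (n - i)) * (n.choose i : R⟦X⟧)) * hw
  choose c v hcv using step
  let s : ℕ → {u : R⟦X⟧ // ∀ n : ℕ, f ^ n ∣ r * u ^ n} := fun n => v^[n] ⟨g, H⟩
  have hs : ∀ n, (s n).1 = C (c (s n)) * f + X * (s (n + 1)).1 := by
    intro n
    have : s (n + 1) = v (s n) := Function.iterate_succ_apply' v n _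
    rw [this]; exact hcv _
  let q : R⟦X⟧ := mk fun n => c (s n)
  have key : ∀ n : ℕ, g = ((trunc n q : Polynomial R) : R⟦X⟧) * f + X ^ n * (s n).1 := by
    intro n
    induction n with
    | zero => simp [s]
    | succ n ih =>
      have e : coeff n q = c (s n) := by simp [q]
      rw [trunc_succ, e]
      push_cast
      rw [monomial_eq_C_mul_X_pow]
      rw [hs n] at ih
      conv_lhs => rw [ih]
      ring
  refine ⟨q, ?_⟩
  rw [← sub_eq_zero]
  ext m
  have hq : (X : R⟦X⟧) ^ (m + 1) ∣ q - (trunc (m + 1) q : Polynomial R) := by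
    rw [X_pow_dvd_iff]
    intro i hi
    simp [coeff_trunc, hi]
  have : (X : R⟦X⟧) ^ (m + 1) ∣ g - f * q := by
    obtain ⟨w, hw⟩ := hq
    refine ⟨(s (m + 1)).1 - f * w, ?_⟩
    linear_combination key (m + 1) - f * hw
  simpa using (X_pow_dvd_iff.1 this) m (Nat.lt_succ_self m)

open PowerSeries in
theorem PowerSeries.exists_eq_X_pow_mul {R : Type*} [CommRing R] [IsDomain R] (f : R⟦X⟧)
    (hf : f ≠ 0) : ∃ (k : ℕ) (u : R⟦X⟧), constantCoeff u ≠ 0 ∧ f = X ^ k * u := by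
  have hfin : FiniteMultiplicity (X : R⟦X⟧) f := by
    rw [FiniteMultiplicity.def]
    by_contra! hc
    apply hf
    ext m
    simpa using X_pow_dvd_iff.1 (hc m) m (Nat.lt_succ_self m)
  obtain ⟨u, hu, hu'⟩ := hfin.exists_eq_pow_mul_and_not_dvd
  exact ⟨_, u, by rwa [X_dvd_iff] at hu', hu⟩

open PowerSeries in
theorem CIC.powerSeries {R : Type*} [CommRing R] [IsDomain R] (h : CIC R) : CIC R⟦X⟧ := by
  intro f g r hf hr H
  obtain ⟨a, f, hf0, rfl⟩ := exists_eq_X_pow_mul f hf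
  obtain ⟨k, r, hr0, rfl⟩ := exists_eq_X_pow_mul r hr
  have ndvd : ∀ n, ¬ (X : R⟦X⟧) ∣ f ^ n := by
    intro n
    rw [X_dvd_iff, map_pow]
    exact pow_ne_zero _ hf0
  have hfg : f ∣ g := by
    refine CIC.powerSeries_aux h f g r hf0 hr0 (fun n => ?_)
    have h1 : f ^ n ∣ X ^ k * (r * g ^ n) := by
      rw [← mul_assoc]
      refine dvd_trans ?_ (H n)
      rw [mul_pow]
      exact dvd_mul_left _ _
    obtain ⟨y, hy⟩ := h1
    obtain ⟨z, rfl⟩ := X_prime.pow_dvd_of_dvd_mul_left k (ndvd n) ⟨_, hy.symm⟩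
    refine ⟨z, mul_left_cancel₀ (pow_ne_zero k (X_ne_zero (R := R))) ?_⟩
    rw [hy]; ring
  obtain ⟨t, rfl⟩ := hfg
  by_cases ht : t = 0
  · simp [ht]
  obtain ⟨b, t, ht0, rfl⟩ := exists_eq_X_pow_mul t ht
  have hab : a ≤ b := by
    by_contra! hlt
    have h1 := H (k + 1)
    have h2 : (X : R⟦X⟧) ^ (a * (k + 1)) ∣ X ^ (k + b * (k + 1)) * (r * f ^ (k+1) * t ^ (k + 1)) := by
      refine dvd_trans ?_ (h1.trans (dvd_of_eq ?_))
      · rw [mul_pow, pow_mul]; exact dvd_mul_right _ _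
      · ring
    have h3 : (X : R⟦X⟧) ^ (a * (k + 1)) ∣ X ^ (k + b * (k + 1)) := by
      refine X_prime.pow_dvd_of_dvd_mul_right _ ?_ h2
      rw [X_dvd_iff]
      simp [hr0, hf0, ht0]
    have h4 := (pow_dvd_pow_iff (X_ne_zero (R := R)) X_prime.not_isUnit).1 h3
    nlinarith
  obtain ⟨c, rfl⟩ := Nat.exists_eq_add_of_le hab
  exact ⟨X ^ c * t, by ring⟩

theorem CIC.mvPowerSeries {R : Type*} [CommRing R] [IsDomain R] (h : CIC R) (d : ℕ) :
    CIC (MvPowerSeries (Fin d) R) := by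
  induction d with
  | zero => exact h.of_equiv (MvPowerSeries.isEmptyEquiv (σ := Fin 0) (R := R)).symm.toRingEquiv
  | succ n ih =>
    have : IsDomain (MvPowerSeries (Fin n) R) := NoZeroDivisors.to_isDomain _
    exact ih.powerSeries.of_equiv (MvPowerSeries.finSuccEquiv R n).symm.toRingEquiv

/-- In a noetherian completely integrally closed domain, associated primes of principal ideals
have height at most one. -/
theorem CIC.dvd_of {R : Type*} [CommRing R] [IsDomain R] [IsNoetherianRing R] (h : CIC R)
    (f : R) (hf : f ≠ 0) (I : Ideal R) (hI : ∀ P : Ideal R, ∀ hP : P.IsPrime,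
      Order.height (⟨P, hP⟩ : PrimeSpectrum R) ≤ 1 → ¬ I ≤ P) (g : R)
    (hg : ∀ a ∈ I, f ∣ a * g) : f ∣ g := by
  by_contra hfg
  have hx : (Ideal.Quotient.mk (Ideal.span {f}) g) ≠ 0 := by
    rwa [Ne, Ideal.Quotient.eq_zero_iff_mem, Ideal.mem_span_singleton]
  obtain ⟨P, hass, hle⟩ := exists_le_isAssociatedPrime_of_isNoetherianRing R _ hx
  obtain ⟨hP, y, hy⟩ := isAssociatedPrime_iff.1 hass
  obtain ⟨g', rfl⟩ := Ideal.Quotient.mk_surjective y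
  have hmem : ∀ a, a ∈ P ↔ f ∣ a * g' := by
    intro a
    rw [hy, Submodule.mem_colon_singleton, Submodule.mem_bot, ← Ideal.mem_span_singleton,
      ← Ideal.Quotient.eq_zero_iff_mem]
    rfl
  have hIP : I ≤ P := by
    intro a ha
    apply hle
    rw [Submodule.mem_colon_singleton, Submodule.mem_bot]
    have := hg a ha
    rwa [← Ideal.mem_span_singleton, ← Ideal.Quotient.eq_zero_iff_mem] at this
  have hfP : f ∈ P := (hmem f).2 (dvd_mul_right _ _)
  have hg' : ¬ f ∣ g' := fun hd => hP.ne_top ((Ideal.eq_top_iff_one P).2 ((hmem 1).2 (by simpa)))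
  by_cases hc : ∀ a ∈ P, ∃ b ∈ P, a * g' = f * b
  · apply hg'
    refine h f g' f hf hf (fun n => ?_)
    suffices ∃ b ∈ P, f * g' ^ n = f ^ n * b by
      obtain ⟨b, -, hb⟩ := this
      exact ⟨b, hb⟩
    induction n with
    | zero => exact ⟨f, hfP, by simp⟩
    | succ n ih =>
      obtain ⟨b, hb, e⟩ := ih
      obtain ⟨b', hb', e'⟩ := hc b hb
      exact ⟨b', hb', by linear_combination g' * e + f ^ n * e'⟩
  · push Not at hc
    obtain ⟨a, ha, hc⟩ := hc
    obtain ⟨u, hu⟩ := (hmem a).1 ha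
    have huP : u ∉ P := fun h' => hc u h' hu
    refine hI P hP ?_ hIP
    have hmin : P ∈ (Ideal.span {a}).minimalPrimes := by
      refine ⟨⟨hP, by simpa [Ideal.span_le] using ha⟩, ?_⟩
      rintro Q ⟨hQ, haQ⟩ hQP b hb
      obtain ⟨c, hcb⟩ := (hmem b).1 hb
      have haQ' : a ∈ Q := haQ (Ideal.mem_span_singleton_self a)
      have e : b * u = a * c := by
        apply mul_left_cancel₀ hf
        linear_combination a * hcb - b * hu
      have : b * u ∈ Q := e ▸ Q.mul_mem_right c haQ'
      exact (hQ.mem_or_mem this).resolve_right fun h' => huP (hQP h')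
    have := Ideal.height_le_one_of_isPrincipal_of_mem_minimalPrimes _ _ hmin
    exact (PrimeSpectrum.height_eq_orderHeight ⟨P, hP⟩).symm.trans_le this

/-- The homological core: a `1`-cocycle killed up to coboundary by a big ideal is a coboundary. -/
theorem cocycle_core {R : Type*} [CommRing R] [IsDomain R] {P₀ P₁ P₂ : Type*}
    [AddCommGroup P₀] [AddCommGroup P₁] [AddCommGroup P₂] [Module R P₀] [Module R P₁] [Module R P₂]
    (d₂ : P₂ →ₗ[R] P₁) (d₁ : P₁ →ₗ[R] P₀) (hex : ∀ x, d₁ x = 0 → ∃ y, d₂ y = x)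
    (f : R) (hf : f ≠ 0) (hfP : ∀ y, ∃ w, d₁ w = f • y) (I : Set R)
    (hI : ∀ g, (∀ a ∈ I, f ∣ a * g) → f ∣ g)
    (φ : P₁ →ₗ[R] R) (hφ : ∀ z, φ (d₂ z) = 0)
    (hψ : ∀ a ∈ I, ∃ ψ : P₀ →ₗ[R] R, ∀ w, a * φ w = ψ (d₁ w)) :
    ∃ ψ : P₀ →ₗ[R] R, ∀ w, φ w = ψ (d₁ w) := by
  have hwd : ∀ w w', d₁ w = d₁ w' → φ w = φ w' := by
    intro w w' e
    obtain ⟨z, hz⟩ := hex (w - w') (by rw [map_sub, e, sub_self])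
    have := hφ z
    rwa [hz, map_sub, sub_eq_zero] at this
  choose σ hσ using hfP
  have hdvd : ∀ y, f ∣ φ (σ y) := by
    intro y
    apply hI
    intro a ha
    obtain ⟨ψ, hψ⟩ := hψ a ha
    rw [hψ, hσ, map_smul]
    exact ⟨_, rfl⟩
  choose τ hτ using hdvd
  refine ⟨{ toFun := τ, map_add' := fun x y => ?_, map_smul' := fun r x => ?_ }, fun w => ?_⟩
  · apply mul_left_cancel₀ hf
    rw [← hτ, mul_add, ← hτ, ← hτ, ← map_add]
    apply hwd
    simp [hσ]
  · apply mul_left_cancel₀ hf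
    have : f * (RingHom.id R r • τ x) = r * (f * τ x) := by simp; ring
    rw [← hτ, this, ← hτ, ← smul_eq_mul, ← map_smul]
    apply hwd
    rw [hσ, map_smul, hσ, smul_comm]
  · apply mul_left_cancel₀ hf
    change _ = f * τ (d₁ w)
    rw [← hτ, ← smul_eq_mul, ← map_smul]
    apply hwd
    simp [hσ]

theorem ext_noPseudoNull (R : Type) [CommRing R] [IsDomain R] [IsNoetherianRing R] (h : CIC R)
    (M : Type) [AddCommGroup M] [Module R M] [Module.Finite R M] (htors : Module.IsTorsion R M)
    (N : Submodule R (extModule R M R 1)) (hN : IsPseudoNull R N) : N = ⊥ := by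
  obtain ⟨f, hfM, hf⟩ := Submodule.annihilator_top_inter_nonZeroDivisors htors
  have hf0 : f ≠ 0 := nonZeroDivisors.ne_zero hf
  have hfM' : ∀ m : M, f • m = 0 := fun m => by
    have := Submodule.mem_annihilator.1 hfM m trivial
    exact this
  rw [Submodule.eq_bot_iff]
  intro x hx
  -- the annihilator of `x`
  let I : Ideal R := LinearMap.ker (LinearMap.toSpanSingleton R _ x)
  have hImem : ∀ a ∈ I, a • x = 0 := fun a ha => ha
  have hI : ∀ P : Ideal R, ∀ hP : P.IsPrime,
      Order.height (⟨P, hP⟩ : PrimeSpectrum R) ≤ 1 → ¬ I ≤ P := by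
    intro P hP hht hle
    have hsub := hN P hP hht
    have h0 : LocalizedModule.mkLinearMap P.primeCompl N ⟨x, hx⟩ = 0 := Subsingleton.elim _ _
    obtain ⟨c, hc⟩ := (IsLocalizedModule.eq_zero_iff P.primeCompl
      (LocalizedModule.mkLinearMap P.primeCompl N)).1 h0
    apply c.2
    apply hle
    exact congrArg Subtype.val hc
  let P := projectiveResolution (ModuleCat.of R M)
  let K := P.complex.linearYonedaObj R (ModuleCat.of R R)
  let S := K.sc' 0 1 2
  let e : extModule R M R 1 ≅ S.moduleCatLeftHomologyData.H :=
    P.isoExt 1 (ModuleCat.of R R) ≪≫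
      ShortComplex.homologyMapIso (K.isoSc' 0 1 2 (by simp) (by simp)) ≪≫ S.moduleCatHomologyIso
  let E : extModule R M R 1 ≃ₗ[R]
    (LinearMap.ker S.g.hom ⧸ LinearMap.range S.moduleCatToCycles) := e.toLinearEquiv
  obtain ⟨φ, hφ⟩ := Submodule.mkQ_surjective _ (E x)
  have key := cocycle_core (P.complex.d 2 1).hom (P.complex.d 1 0).hom
    ((ShortComplex.moduleCat_exact_iff _).1 (P.exact_succ 0)) f hf0
    (fun y => (ShortComplex.moduleCat_exact_iff _).1 P.exact₀ (f • y) (by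
      change (P.π.f 0).hom (f • y) = 0
      rw [map_smul]
      exact hfM' _)) I
    (h.dvd_of f hf0 I hI) (ModuleCat.Hom.hom (φ.1 : P.complex.X 1 ⟶ ModuleCat.of R R)) (fun z => by
      have h2 : P.complex.d 2 1 ≫ (φ.1 : P.complex.X 1 ⟶ ModuleCat.of R R) = 0 := φ.2
      exact congrArg (fun k => ModuleCat.Hom.hom k z) h2) (fun a ha => by
      have h0 : E (a • x) = 0 := by rw [hImem a ha, map_zero]
      rw [map_smul, ← hφ, ← map_smul, Submodule.mkQ_apply, Submodule.Quotient.mk_eq_zero] at h0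
      obtain ⟨ψ, hψ⟩ := h0
      have hψ' : P.complex.d 1 0 ≫ (ψ : P.complex.X 0 ⟶ ModuleCat.of R R) =
        a • (φ.1 : P.complex.X 1 ⟶ ModuleCat.of R R) := congrArg Subtype.val hψ
      refine ⟨ModuleCat.Hom.hom (ψ : P.complex.X 0 ⟶ ModuleCat.of R R), fun w => ?_⟩
      exact (congrArg (fun k => ModuleCat.Hom.hom k w) hψ').symm)
  obtain ⟨ψ, hψ⟩ := key
  apply E.injective
  rw [map_zero, ← hφ, Submodule.mkQ_apply, Submodule.Quotient.mk_eq_zero]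
  refine ⟨(ModuleCat.ofHom ψ : P.complex.X 0 ⟶ ModuleCat.of R R), ?_⟩
  apply Subtype.ext
  have : P.complex.d 1 0 ≫ (ModuleCat.ofHom ψ : P.complex.X 0 ⟶ ModuleCat.of R R) =
      (φ.1 : P.complex.X 1 ⟶ ModuleCat.of R R) := by
    ext w
    exact (hψ w).symm
  exact this

/-- For Λ = ℤ_p[[T₁,…,T_d]] and M a finitely generated torsion Λ-module,
Ext^1_Λ(M,Λ) has no nonzero pseudo-null Λ-submodule. -/
theorem stmt_4 (p : ℕ) [Fact p.Prime] (d : ℕ) (hd : 1 ≤ d)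
    (M : Type) [AddCommGroup M] [Module (MvPowerSeries (Fin d) ℤ_[p]) M]
    [Module.Finite (MvPowerSeries (Fin d) ℤ_[p]) M]
    (htors : Module.IsTorsion (MvPowerSeries (Fin d) ℤ_[p]) M) :
    ∀ N : Submodule (MvPowerSeries (Fin d) ℤ_[p])
      (extModule (MvPowerSeries (Fin d) ℤ_[p]) M (MvPowerSeries (Fin d) ℤ_[p]) 1),
      IsPseudoNull (MvPowerSeries (Fin d) ℤ_[p]) N → N = ⊥ := by
  intro N hN
  have : IsDomain (MvPowerSeries (Fin d) ℤ_[p]) := NoZeroDivisors.to_isDomain _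
  exact ext_noPseudoNull _ ((CIC.of_valuationRing ℤ_[p]).mvPowerSeries d) M htors N hN
end

section
/- Let Λ = ℤ_p[[T₁,…,T_d]] and M a finitely generated torsion Λ-module. Then there exists a Λ-module homomorphism M → Ext^1_Λ(Ext^1_Λ(M,Λ), Λ) whose kernel and cokernel are pseudo-null. -/
open CategoryTheory

section PartA

variable {R : Type} [CommRing R] [IsDomain R]

theorem locPrin_of_height [IsNoetherianRing R] [IsIntegrallyClosed R] (P : Ideal R) (hP : P.IsPrime)
    (h : Order.height (⟨P, hP⟩ : PrimeSpectrum R) ≤ 1) (I : Ideal R) :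
    ∃ b ∈ I, ∃ s, s ∉ P ∧ ∀ r ∈ I, b ∣ s * r := by
  have hle : P.primeCompl ≤ nonZeroDivisors R := P.primeCompl_le_nonZeroDivisors
  let A := Localization.AtPrime P
  have : IsDomain A := IsLocalization.isDomain_localization hle
  have : IsNoetherianRing A := IsLocalization.isNoetherianRing P.primeCompl A inferInstance
  have : IsIntegrallyClosed A := isIntegrallyClosed_of_isLocalization (R := R) A P.primeCompl hle
  have hpid : IsPrincipalIdealRing A := by
    have tf : (IsIntegrallyClosed A ∧ ∀ Q : Ideal A, Q ≠ ⊥ → Q.IsPrime →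
        Q = IsLocalRing.maximalIdeal A) ↔ IsPrincipalIdealRing A :=
      (tfae_of_isNoetherianRing_of_isLocalRing_of_isDomain A).out 3 0
    refine tf.1 ⟨this, ?_⟩
    intro Q hQ0 hQ
    by_contra hne
    have hlt : Q < IsLocalRing.maximalIdeal A :=
      lt_of_le_of_ne (IsLocalRing.le_maximalIdeal hQ.ne_top) hne
    have hmc : ∀ J : Ideal A, (J.comap (algebraMap R A)).map (algebraMap R A) = J :=
      fun J => IsLocalization.map_under P.primeCompl A J
    let Q' : PrimeSpectrum R := ⟨Q.comap (algebraMap R A), hQ.comap _⟩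
    have hc : (IsLocalRing.maximalIdeal A).comap (algebraMap R A) = P :=
      IsLocalization.AtPrime.under_maximalIdeal A P
    have h1 : Q' < ⟨P, hP⟩ := by
      rw [← PrimeSpectrum.asIdeal_lt_asIdeal]
      refine lt_of_le_of_ne ?_ ?_
      · change Q.comap (algebraMap R A) ≤ P
        exact (Ideal.comap_mono hlt.le).trans hc.le
      · intro heq
        change Q.comap (algebraMap R A) = P at heq
        apply hne
        rw [← hmc Q, heq.trans hc.symm, hmc]
    have h0 : (⟨⊥, Ideal.isPrime_bot⟩ : PrimeSpectrum R) < Q' := by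
      rw [← PrimeSpectrum.asIdeal_lt_asIdeal]
      refine lt_of_le_of_ne bot_le ?_
      intro heq
      change ⊥ = Q.comap (algebraMap R A) at heq
      apply hQ0
      rw [← hmc Q, ← heq, Ideal.map_bot]
    have := Order.height_add_one_le h0
    have h2 := Order.height_add_one_le h1
    have : (1 : ℕ∞) + 1 ≤ 1 := by
      refine le_trans ?_ (h2.trans h)
      gcongr
      exact le_trans (by simp) this
    exact absurd this (by decide)
  obtain ⟨g, hg⟩ := (hpid.principal (I.map (algebraMap R A)))
  have hgI : g ∈ I.map (algebraMap R A) := by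
    rw [hg]; exact Submodule.mem_span_singleton_self g
  obtain ⟨⟨b, t⟩, hbt⟩ := (IsLocalization.mem_map_algebraMap_iff P.primeCompl A).1 hgI
  obtain ⟨T, hT⟩ := (IsNoetherian.noetherian I : I.FG)
  have key : ∀ r ∈ I, ∃ s, s ∉ P ∧ (b : R) ∣ s * r := by
    intro r hr
    have : algebraMap R A r ∈ I.map (algebraMap R A) := Ideal.mem_map_of_mem _ hr
    rw [hg] at this
    obtain ⟨c, hc⟩ := Submodule.mem_span_singleton.1 this
    obtain ⟨⟨c', u⟩, hcu⟩ := IsLocalization.surj P.primeCompl c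
    refine ⟨u * t, ?_, c', ?_⟩
    · exact (u * t).2
    · apply IsLocalization.injective A hle
      simp only [map_mul]
      simp only [smul_eq_mul] at hc hbt hcu
      rw [← hc, ← hbt, ← hcu]
      ring
  refine ⟨b, b.2, ?_⟩
  obtain ⟨b, hbI⟩ := b
  dsimp only at key ⊢
  clear hbt
  have hT' : ∀ x ∈ T, x ∈ I := fun x hx => by rw [← hT]; exact Submodule.subset_span hx
  choose! s hs hbs using key
  refine ⟨∏ x ∈ T, s x, ?_, ?_⟩
  · have := P.primeCompl.prod_mem (t := T) (f := s) (fun x hx => hs x (hT' x hx))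
    exact this
  · intro r hr
    rw [← hT] at hr
    induction hr using Submodule.span_induction with
    | mem x hx => exact (hbs x (hT' x hx)).trans (mul_dvd_mul_right (Finset.dvd_prod_of_mem s hx) x)
    | zero => simp
    | add x y _ _ hx hy => rw [mul_add]; exact dvd_add hx hy
    | smul c x _ hx => rw [smul_eq_mul, mul_left_comm]; exact hx.mul_left c

variable {P : Ideal R} [hP : P.IsPrime] {a : R}

theorem mk_smul_eq (a r z : R) : r • (Ideal.Quotient.mk (Ideal.span {a}) z)
    = Ideal.Quotient.mk (Ideal.span {a}) (r * z) := by
  rw [map_mul]; exact Algebra.smul_def r _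

theorem mk_eq_zero' (a z : R) : Ideal.Quotient.mk (Ideal.span {a}) z = 0 ↔ a ∣ z := by
  rw [Ideal.Quotient.eq_zero_iff_mem, Ideal.mem_span_singleton]

theorem extend_one
    (hL : ∀ I : Ideal R, ∃ b ∈ I, ∃ s, s ∉ P ∧ ∀ r ∈ I, b ∣ s * r) (ha : a ≠ 0)
    {N : Type} [AddCommGroup N] [Module R N] (haN : ∀ x : N, a • x = 0)
    (f : N →ₗ.[R] (R ⧸ Ideal.span {a})) (x : N) :
    ∃ s, s ∉ P ∧ ∃ g : N →ₗ.[R] (R ⧸ Ideal.span {a}), x ∈ g.domain ∧ s • f ≤ g := by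
  obtain ⟨b, hb, s, hs, hbs⟩ := hL (f.domain.comap (LinearMap.toSpanSingleton R N x))
  have hIx : ∀ r, r • x ∈ f.domain → b ∣ s * r := fun r hr => hbs r (by simpa using hr)
  have hb : b • x ∈ f.domain := by simpa using hb
  have hs0 : s ≠ 0 := fun h => hs (h ▸ P.zero_mem)
  obtain ⟨c, hc⟩ := hIx a (by rw [haN]; exact zero_mem _)
  have hc0 : c ≠ 0 := by rintro rfl; simp [hs0, ha] at hc
  have hb0 : b ≠ 0 := by rintro rfl; simp [hs0, ha] at hc
  obtain ⟨y, hy⟩ := Ideal.Quotient.mk_surjective (f ⟨b • x, hb⟩)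
  obtain ⟨z, hz⟩ : a ∣ c * y := by
    rw [← mk_eq_zero', ← mk_smul_eq, hy, ← f.map_smul]
    have : c • (⟨b • x, hb⟩ : f.domain) = 0 := by
      ext
      simp only [Submodule.coe_smul, Submodule.coe_zero, ← mul_smul]
      rw [mul_comm c b, ← hc, mul_smul, haN, smul_zero]
    rw [this, f.map_zero]
  have hyz : s * y = b * z := by
    apply mul_left_cancel₀ hc0
    linear_combination s * hz + z * hc
  have key : ∀ (r : R) (hr : r • x ∈ f.domain), (s * s) • f ⟨r • x, hr⟩ =
      r • (Ideal.Quotient.mk (Ideal.span {a}) (s * z)) := by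
    intro r hr
    obtain ⟨t, ht⟩ := hIx r hr
    have : s • f ⟨r • x, hr⟩ = t • f ⟨b • x, hb⟩ := by
      rw [← f.map_smul, ← f.map_smul]
      congr 1
      ext
      simp only [Submodule.coe_smul, ← mul_smul]
      rw [ht, mul_comm]
    rw [mul_smul, this, ← hy, mk_smul_eq, mk_smul_eq, mk_smul_eq]
    congr 1
    linear_combination t * hyz - z * ht
  refine ⟨s * s, fun h => (hP.mem_or_mem h).elim hs hs, ?_⟩
  refine ⟨((s * s) • f).sup (LinearPMap.mkSpanSingleton' x
    (Ideal.Quotient.mk (Ideal.span {a}) (s * z)) ?_) ?_, ?_, LinearPMap.left_le_sup _ _ _⟩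
  · intro r hr
    have := key r (by rw [hr]; exact zero_mem _)
    simp only [RingHom.id_apply]
    rw [← this]
    have h0 : (⟨r • x, by rw [hr]; exact zero_mem _⟩ : f.domain) = 0 := by
      ext; exact hr
    rw [h0, f.map_zero, smul_zero]
  · rintro ⟨u, hu⟩ ⟨v, hv⟩ huv
    obtain ⟨r, rfl⟩ := Submodule.mem_span_singleton.1 hv
    obtain rfl : u = r • x := huv
    rw [LinearPMap.mkSpanSingleton'_apply]
    exact key r hu
  · rw [LinearPMap.domain_sup]
    exact Submodule.mem_sup_right (Submodule.mem_span_singleton_self x)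

theorem extend_finset
    (hL : ∀ I : Ideal R, ∃ b ∈ I, ∃ s, s ∉ P ∧ ∀ r ∈ I, b ∣ s * r) (ha : a ≠ 0)
    {N : Type} [AddCommGroup N] [Module R N] (haN : ∀ x : N, a • x = 0)
    (f : N →ₗ.[R] (R ⧸ Ideal.span {a})) (T : Finset N) :
    ∃ s, s ∉ P ∧ ∃ g : N →ₗ.[R] (R ⧸ Ideal.span {a}), (∀ x ∈ T, x ∈ g.domain) ∧ s • f ≤ g := by
  classical
  induction T using Finset.induction_on with
  | empty => exact ⟨1, fun h => hP.ne_top ((Ideal.eq_top_iff_one P).2 h), f, by simp,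
      le_of_eq (one_smul _ _)⟩
  | insert x T _ ih =>
    obtain ⟨s, hs, g, hg, hle⟩ := ih
    obtain ⟨s', hs', g', hg', hle'⟩ := extend_one hL ha haN g x
    refine ⟨s' * s, fun h => (hP.mem_or_mem h).elim hs' hs, g', ?_, ?_⟩
    · intro y hy
      rcases Finset.mem_insert.1 hy with rfl | hy
      · exact hg'
      · exact hle'.1 (hg y hy)
    · refine le_trans ?_ hle'
      refine ⟨hle.1, ?_⟩
      intro u v huv
      rw [LinearPMap.smul_apply, LinearPMap.smul_apply, mul_smul]
      rw [← hle.2 huv, LinearPMap.smul_apply]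

theorem extend_all
    (hL : ∀ I : Ideal R, ∃ b ∈ I, ∃ s, s ∉ P ∧ ∀ r ∈ I, b ∣ s * r) (ha : a ≠ 0)
    {N : Type} [AddCommGroup N] [Module R N] [Module.Finite R N]
    (haN : ∀ x : N, a • x = 0)
    (f : N →ₗ.[R] (R ⧸ Ideal.span {a})) :
    ∃ s, s ∉ P ∧ ∃ g : N →ₗ[R] (R ⧸ Ideal.span {a}), ∀ x : f.domain, g x = s • f x := by
  obtain ⟨T, hT⟩ := Module.Finite.fg_top (R := R) (M := N)
  obtain ⟨s, hs, g, hg, hle⟩ := extend_finset hL ha haN f T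
  have htop : ∀ x, x ∈ g.domain := by
    have : ⊤ ≤ g.domain := by rw [← hT]; exact Submodule.span_le.2 hg
    exact fun x => this trivial
  refine ⟨s, hs, g.toFun ∘ₗ LinearMap.codRestrict g.domain LinearMap.id htop, ?_⟩
  intro x
  exact (hle.2 (x := x) (y := ⟨x, htop x⟩) rfl).symm

theorem ev_ker
    (hL : ∀ I : Ideal R, ∃ b ∈ I, ∃ s, s ∉ P ∧ ∀ r ∈ I, b ∣ s * r) (ha : a ≠ 0)
    {N : Type} [AddCommGroup N] [Module R N] [Module.Finite R N]
    (haN : ∀ x : N, a • x = 0) (x : N) (hx : ∀ φ : N →ₗ[R] (R ⧸ Ideal.span {a}), φ x = 0) :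
    ∃ s, s ∉ P ∧ s • x = 0 := by
  obtain ⟨b, hb, s, hs, hbs⟩ := hL (LinearMap.ker (LinearMap.toSpanSingleton R N x))
  have hIx : ∀ r, r • x = 0 → b ∣ s * r := fun r hr => hbs r (by simpa using hr)
  have hb : b • x = 0 := by simpa using hb
  have hs0 : s ≠ 0 := fun h => hs (h ▸ P.zero_mem)
  obtain ⟨c, hc⟩ := hIx a (haN x)
  have hc0 : c ≠ 0 := by rintro rfl; simp [hs0, ha] at hc
  let f : N →ₗ.[R] (R ⧸ Ideal.span {a}) := LinearPMap.mkSpanSingleton' x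
    (Ideal.Quotient.mk (Ideal.span {a}) c) (by
      intro r hr
      obtain ⟨t, ht⟩ := hIx r hr
      rw [RingHom.id_apply, mk_smul_eq, mk_eq_zero']
      refine ⟨t, mul_left_cancel₀ hs0 ?_⟩
      linear_combination c * ht - t * hc)
  obtain ⟨s', hs', g, hg⟩ := extend_all hL ha haN f
  have h1 := hg ⟨x, Submodule.mem_span_singleton_self x⟩
  have h2 : f ⟨x, Submodule.mem_span_singleton_self x⟩ = Ideal.Quotient.mk (Ideal.span {a}) c :=
    LinearPMap.mkSpanSingleton'_apply_self _ _ _ _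
  rw [h2, hx g, mk_smul_eq, eq_comm, mk_eq_zero'] at h1
  obtain ⟨w, hw⟩ := h1
  have : s * s' = b * w := by
    apply mul_left_cancel₀ hc0
    linear_combination s * hw + w * hc
  refine ⟨s * s', fun h => (hP.mem_or_mem h).elim hs hs', ?_⟩
  rw [this, mul_comm, mul_smul, hb, smul_zero]

theorem ev_coker
    (hL : ∀ I : Ideal R, ∃ b ∈ I, ∃ s, s ∉ P ∧ ∀ r ∈ I, b ∣ s * r) (ha : a ≠ 0)
    {N : Type} [AddCommGroup N] [Module R N] [Module.Finite R N]
    (Φ : (N →ₗ[R] (R ⧸ Ideal.span {a})) →ₗ[R] (R ⧸ Ideal.span {a})) :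
    ∃ s, s ∉ P ∧ ∃ x : N, ∀ φ, s • Φ φ = φ x := by
  obtain ⟨n, v, hv⟩ := Module.Finite.exists_fin (R := R) (M := N)
  let E := R ⧸ Ideal.span {a}
  let ι : (N →ₗ[R] E) →ₗ[R] (Fin n → E) := LinearMap.pi fun i => LinearMap.applyₗ (v i)
  have hι : Function.Injective ι := by
    intro φ ψ h
    apply LinearMap.ext_on hv
    rintro _ ⟨i, rfl⟩
    exact congrFun h i
  let e := LinearEquiv.ofInjective ι hι
  let f : (Fin n → E) →ₗ.[R] E := ⟨LinearMap.range ι, Φ ∘ₗ e.symm.toLinearMap⟩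
  have haE : ∀ x : E, a • x = 0 := by
    intro x
    obtain ⟨y, rfl⟩ := Ideal.Quotient.mk_surjective x
    rw [mk_smul_eq, mk_eq_zero']
    exact dvd_mul_right _ _
  obtain ⟨s, hs, g, hg⟩ := extend_all hL ha (N := Fin n → E) (fun x => by ext i; exact haE (x i)) f
  have hl : ∀ i, ∃ l : R, Ideal.Quotient.mk (Ideal.span {a}) l = g (Pi.single i 1) :=
    fun i => Ideal.Quotient.mk_surjective _
  choose l hl using hl
  refine ⟨s, hs, ∑ i, l i • v i, ?_⟩
  intro φ
  have h1 := hg ⟨ι φ, φ, rfl⟩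
  have h2 : f ⟨ι φ, φ, rfl⟩ = Φ φ := by
    change Φ (e.symm (e φ)) = _
    rw [e.symm_apply_apply]
  rw [h2] at h1
  rw [← h1, map_sum]
  change g (ι φ) = _
  have h3 : ι φ = ∑ i, Pi.single i (ι φ i) := by
    rw [Finset.univ_sum_single]
  rw [h3, map_sum]
  refine Finset.sum_congr rfl fun i _ => ?_
  rw [map_smul]
  change g (Pi.single i (φ (v i))) = _
  obtain ⟨y, hy⟩ := Ideal.Quotient.mk_surjective (φ (v i))
  rw [← hy]
  have : (Pi.single i (Ideal.Quotient.mk (Ideal.span {a}) y) : Fin n → E) =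
      y • Pi.single i 1 := by
    rw [← Pi.single_smul]
    congr 1
    rw [← map_one (Ideal.Quotient.mk (Ideal.span {a})), mk_smul_eq, mul_one]
  rw [this, map_smul, ← hl, mk_smul_eq, mk_smul_eq, mul_comm]

end PartA

section PartB

theorem isIntegrallyClosed_of_dvd {A : Type*} [CommRing A] [IsDomain A]
    (h : ∀ f g r : A, g ≠ 0 → r ≠ 0 → (∀ n : ℕ, g ^ n ∣ r * f ^ n) → g ∣ f) :
    IsIntegrallyClosed A := by
  refine (isIntegrallyClosed_iff (FractionRing A)).2 ?_
  intro x hx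
  obtain ⟨r, hr, H⟩ := hx.isAlmostIntegral
  obtain ⟨f, g, hg, rfl⟩ := IsFractionRing.div_surjective (A := A) x
  have hg0 : g ≠ 0 := nonZeroDivisors.ne_zero hg
  have hg0' : algebraMap A (FractionRing A) g ≠ 0 := by simpa using hg0
  obtain ⟨c, hc⟩ := h f g r hg0 (nonZeroDivisors.ne_zero hr) (by
    intro n
    obtain ⟨y, hy⟩ := H n
    refine ⟨y, ?_⟩
    apply IsFractionRing.injective A (FractionRing A)
    simp only [map_mul, map_pow]
    rw [hy, Algebra.smul_def, div_pow]
    field_simp)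
  refine ⟨c, ?_⟩
  rw [hc, map_mul]
  field_simp

theorem dvd_of_isIntegrallyClosed {A : Type*} [CommRing A] [IsDomain A] [IsNoetherianRing A]
    [IsIntegrallyClosed A] (f g r : A) (hg : g ≠ 0) (hr : r ≠ 0)
    (H : ∀ n : ℕ, g ^ n ∣ r * f ^ n) : g ∣ f := by
  have hg0' : algebraMap A (FractionRing A) g ≠ 0 := by simpa using hg
  have : IsAlmostIntegral A (algebraMap A (FractionRing A) f / algebraMap A (FractionRing A) g) := by
    refine ⟨r, mem_nonZeroDivisors_of_ne_zero hr, ?_⟩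
    intro n
    obtain ⟨c, hc⟩ := H n
    refine ⟨c, ?_⟩
    have := congrArg (algebraMap A (FractionRing A)) hc
    simp only [map_mul, map_pow] at this
    rw [Algebra.smul_def, div_pow]
    field_simp
    rw [this]; ring
  obtain ⟨y, hy⟩ := (isIntegrallyClosed_iff (FractionRing A)).1 inferInstance this.isIntegral
  refine ⟨y, ?_⟩
  apply IsFractionRing.injective A (FractionRing A)
  rw [map_mul, hy]
  field_simp

open PowerSeries in
theorem coeff_mem_of_almost {A : Type} [CommRing A] [IsDomain A] [IsNoetherianRing A]
    [IsIntegrallyClosed A] (r : PowerSeries A) (hr : r ≠ 0) (m : ℕ) :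
    ∀ (h : PowerSeries (FractionRing A))
    (_ : ∀ n, ∃ q : PowerSeries A, PowerSeries.map (algebraMap A (FractionRing A)) q =
      PowerSeries.map (algebraMap A (FractionRing A)) r * h ^ n),
    ∃ c : A, algebraMap A (FractionRing A) c = PowerSeries.coeff m h := by
  have key : ∀ (h : PowerSeries (FractionRing A))
    (_ : ∀ n, ∃ q : PowerSeries A, PowerSeries.map (algebraMap A (FractionRing A)) q =
      PowerSeries.map (algebraMap A (FractionRing A)) r * h ^ n),
    ∃ c : A, algebraMap A (FractionRing A) c = PowerSeries.coeff 0 h := by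
    intro h H
    obtain ⟨k, r', hr', hrk⟩ : ∃ k : ℕ, ∃ r' : PowerSeries A, constantCoeff r' ≠ 0 ∧
        r = X ^ k * r' := by
      refine ⟨r.order.toNat, PowerSeries.divXPowOrder r, ?_, (PowerSeries.X_pow_order_mul_divXPowOrder).symm⟩
      rw [PowerSeries.constantCoeff_divXPowOrder]
      exact PowerSeries.coeff_order hr
    have : IsAlmostIntegral A (PowerSeries.coeff 0 h) := by
      refine ⟨constantCoeff r', mem_nonZeroDivisors_of_ne_zero hr', ?_⟩
      intro n
      obtain ⟨q, hq⟩ := H n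
      refine ⟨coeff k q, ?_⟩
      have := congrArg (coeff k) hq
      rw [PowerSeries.coeff_map] at this
      have h3 : PowerSeries.map (algebraMap A (FractionRing A)) r * h ^ n =
          X ^ k * (PowerSeries.map (algebraMap A (FractionRing A)) r' * h ^ n) := by
        rw [hrk, map_mul, map_pow, PowerSeries.map_X, mul_assoc]
      rw [this, h3]
      have h2 := PowerSeries.coeff_X_pow_mul (PowerSeries.map (algebraMap A (FractionRing A)) r' * h ^ n) k 0
      rw [zero_add] at h2
      have h4 : constantCoeff (PowerSeries.map (algebraMap A (FractionRing A)) r') =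
          algebraMap A (FractionRing A) (constantCoeff r') := by
        rw [← PowerSeries.coeff_zero_eq_constantCoeff_apply,
          ← PowerSeries.coeff_zero_eq_constantCoeff_apply, PowerSeries.coeff_map]
      rw [h2, Algebra.smul_def, PowerSeries.coeff_zero_eq_constantCoeff_apply,
        PowerSeries.coeff_zero_eq_constantCoeff_apply, map_mul, map_pow, h4]
    exact (isIntegrallyClosed_iff (FractionRing A)).1 inferInstance this.isIntegral
  induction m with
  | zero => exact key
  | succ m ih =>
    intro h H
    obtain ⟨c, hc⟩ := key h H
    obtain ⟨h', hh'⟩ : (X : PowerSeries (FractionRing A)) ∣ h - C (coeff 0 h) := by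
      rw [PowerSeries.X_dvd_iff]; simp
    have hcoe : coeff (m + 1) h = coeff m h' := by
      have := congrArg (coeff (m + 1)) hh'
      rw [PowerSeries.coeff_succ_X_mul] at this
      rw [← this, map_sub, PowerSeries.coeff_C]
      simp
    rw [hcoe]
    apply ih
    intro n
    -- r * (h - C c)^n is in the image
    have h1 : ∃ q : PowerSeries A, PowerSeries.map (algebraMap A (FractionRing A)) q =
      PowerSeries.map (algebraMap A (FractionRing A)) r * (h - C (coeff 0 h)) ^ n := by
      choose q hq using H
      refine ⟨∑ m ∈ Finset.range (n + 1), q m * (C (-c)) ^ (n - m) * (n.choose m : PowerSeries A), ?_⟩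
      rw [sub_eq_add_neg, add_pow, Finset.mul_sum, map_sum]
      refine Finset.sum_congr rfl fun i _ => ?_
      rw [map_mul, map_mul, map_pow, hq, map_natCast, PowerSeries.map_C, map_neg, hc, map_neg]
      ring
    obtain ⟨q, hq⟩ := h1
    rw [hh', mul_pow] at hq
    have : X ^ n ∣ q := by
      rw [PowerSeries.X_pow_dvd_iff]
      intro i hi
      apply IsFractionRing.injective A (FractionRing A)
      rw [← PowerSeries.coeff_map, hq, mul_left_comm, map_zero, PowerSeries.coeff_X_pow_mul',
        if_neg (by omega)]
    obtain ⟨q', rfl⟩ := this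
    refine ⟨q', ?_⟩
    apply mul_left_cancel₀ (pow_ne_zero n (PowerSeries.X_ne_zero (R := FractionRing A)))
    rw [map_mul, map_pow, PowerSeries.map_X] at hq
    rw [hq]; ring

theorem powerSeries_isIntegrallyClosed {A : Type} [CommRing A] [IsDomain A] [IsNoetherianRing A]
    [IsIntegrallyClosed A] : IsIntegrallyClosed (PowerSeries A) := by
  apply isIntegrallyClosed_of_dvd
  intro f g r hg hr H
  let i := PowerSeries.map (algebraMap A (FractionRing A))
  have hi : Function.Injective i :=
    PowerSeries.map_injective _ (IsFractionRing.injective A (FractionRing A))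
  have hi0 : ∀ x, x ≠ 0 → i x ≠ 0 := fun x hx h => hx (hi (by rw [h, map_zero]))
  obtain ⟨h, hh⟩ := dvd_of_isIntegrallyClosed (i f) (i g) (i r) (hi0 g hg) (hi0 r hr) (by
    intro n
    have := map_dvd i (H n)
    simpa using this)
  have hc := fun m => coeff_mem_of_almost r hr m h (by
    intro n
    obtain ⟨q, hq⟩ := H n
    refine ⟨q, ?_⟩
    apply mul_left_cancel₀ (pow_ne_zero n (hi0 g hg))
    have := congrArg i hq
    rw [map_mul, map_mul, map_pow, map_pow, hh] at this
    change i g ^ n * i q = i g ^ n * (i r * h ^ n)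
    rw [← this]; ring)
  choose c hc using hc
  refine ⟨PowerSeries.mk c, hi ?_⟩
  rw [map_mul, hh]
  congr 1
  ext m
  rw [PowerSeries.coeff_map, PowerSeries.coeff_mk, hc]

theorem mvPowerSeries_isIntegrallyClosed (A : Type) [CommRing A] [IsDomain A] [IsNoetherianRing A]
    [IsIntegrallyClosed A] (d : ℕ) : IsIntegrallyClosed (MvPowerSeries (Fin d) A) := by
  induction d with
  | zero => exact IsIntegrallyClosed.of_equiv (MvPowerSeries.isEmptyEquiv (Fin 0) A).toRingEquiv.symm
  | succ d ih =>
    have : IsDomain (MvPowerSeries (Fin d) A) := NoZeroDivisors.to_isDomain _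
    have : IsIntegrallyClosed (PowerSeries (MvPowerSeries (Fin d) A)) :=
      powerSeries_isIntegrallyClosed
    exact IsIntegrallyClosed.of_equiv (MvPowerSeries.finSuccEquiv A d).toRingEquiv.symm

end PartB

section PartC

theorem div_linear {R : Type} [CommRing R] [IsDomain R] {a : R} (ha : a ≠ 0)
    {Q : Type} [AddCommGroup Q] [Module R Q] (θ : Q →ₗ[R] R) (h : ∀ x, a ∣ θ x) :
    ∃ φ : Q →ₗ[R] R, ∀ x, θ x = a * φ x := by
  choose φ hφ using h
  refine ⟨{ toFun := φ, map_add' := ?_, map_smul' := ?_ }, hφ⟩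
  · intro x y
    apply mul_left_cancel₀ ha
    rw [← hφ, mul_add, ← hφ, ← hφ, map_add]
  · intro c x
    apply mul_left_cancel₀ ha
    rw [← hφ, map_smul, hφ, RingHom.id_apply, smul_eq_mul, smul_eq_mul]
    ring

theorem ext_concrete {R : Type} [CommRing R] [IsDomain R] {a : R} (ha : a ≠ 0)
    {N P₀ P₁ P₂ : Type} [AddCommGroup N] [Module R N] [AddCommGroup P₀] [Module R P₀]
    [AddCommGroup P₁] [Module R P₁] [AddCommGroup P₂] [Module R P₂]
    [Module.Projective R P₀]
    (haN : ∀ x : N, a • x = 0)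
    (d₂ : P₂ →ₗ[R] P₁) (d₁ : P₁ →ₗ[R] P₀) (ε : P₀ →ₗ[R] N)
    (h₁ : Function.Exact d₂ d₁) (h₀ : Function.Exact d₁ ε) (hε : Function.Surjective ε)
    {Z : Type} [AddCommGroup Z] [Module R Z] (B : Submodule R Z)
    (u : Z →ₗ[R] (P₁ →ₗ[R] R))
    (hr : ∀ φ, φ ∈ LinearMap.range u ↔ φ ∘ₗ d₂ = 0)
    (hB : ∀ z, z ∈ B ↔ ∃ ψ : P₀ →ₗ[R] R, u z = ψ ∘ₗ d₁) :
    Nonempty ((Z ⧸ B) ≃ₗ[R] (N →ₗ[R] (R ⧸ Ideal.span {a}))) := by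
  let E := R ⧸ Ideal.span {a}
  let mk : R →ₗ[R] E := (Ideal.span {a}).mkQ
  have hmk : Function.Surjective mk := Submodule.mkQ_surjective _
  have hmk0 : ∀ x, mk x = 0 ↔ a ∣ x := fun x => by
    rw [← Ideal.mem_span_singleton]; exact Submodule.Quotient.mk_eq_zero _
  -- the homotopy
  obtain ⟨h, hh⟩ : ∃ h : P₀ →ₗ[R] P₁, ∀ x, d₁ (h x) = a • x := by
    obtain ⟨h, hh⟩ := Module.projective_lifting_property d₁.rangeRestrict
      (LinearMap.codRestrict (LinearMap.range d₁) (a • LinearMap.id) (fun x => by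
        have : ε (a • x) = 0 := by rw [map_smul, haN]
        exact (h₀ _).1 this)) d₁.surjective_rangeRestrict
    refine ⟨h, fun x => ?_⟩
    exact congrArg Subtype.val (LinearMap.congr_fun hh x)
  have hZ : ∀ z y, u z (h (d₁ y)) = a * u z y := by
    intro z y
    have : d₁ (h (d₁ y) - a • y) = 0 := by rw [map_sub, hh, map_smul, sub_self]
    obtain ⟨w, hw⟩ := (h₁ _).1 this
    have h2 := LinearMap.congr_fun ((hr (u z)).1 ⟨z, rfl⟩) w
    rw [LinearMap.comp_apply, hw, map_sub, map_smul] at h2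
    exact sub_eq_zero.1 h2
  let Φ : Z →ₗ[R] (P₀ →ₗ[R] E) := (LinearMap.compRight R mk) ∘ₗ (LinearMap.lcomp R R h) ∘ₗ u
  have hΦ : ∀ z x, Φ z x = mk (u z (h x)) := fun z x => rfl
  let T : (N →ₗ[R] E) →ₗ[R] (P₀ →ₗ[R] E) := LinearMap.lcomp R E ε
  have hT : ∀ g x, T g x = g (ε x) := fun g x => rfl
  have hTinj : Function.Injective T := by
    intro g g' hg
    ext x
    obtain ⟨x, rfl⟩ := hε x
    exact LinearMap.congr_fun hg x
  have hker : LinearMap.ker Φ = B := by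
    ext z
    rw [LinearMap.mem_ker, hB]
    constructor
    · intro hz
      obtain ⟨ψ, hψ⟩ := div_linear ha (u z ∘ₗ h) (fun x => by
        rw [← hmk0]; exact LinearMap.congr_fun hz x)
      refine ⟨ψ, ?_⟩
      ext y
      apply mul_left_cancel₀ ha
      rw [← hZ, LinearMap.comp_apply, ← hψ, LinearMap.comp_apply]
    · rintro ⟨ψ, hψ⟩
      ext x
      rw [hΦ, hψ, LinearMap.zero_apply, hmk0, LinearMap.comp_apply, hh, map_smul]
      exact dvd_mul_right _ _
  have hrange : LinearMap.range Φ = LinearMap.range T := by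
    apply le_antisymm
    · rintro _ ⟨z, rfl⟩
      have hk : LinearMap.ker ε ≤ LinearMap.ker (Φ z) := by
        intro x hx
        obtain ⟨y, rfl⟩ := (h₀ _).1 (LinearMap.mem_ker.1 hx)
        rw [LinearMap.mem_ker, hΦ, hZ, hmk0]
        exact dvd_mul_right _ _
      refine ⟨(LinearMap.ker ε).liftQ (Φ z) hk ∘ₗ
        (ε.quotKerEquivOfSurjective hε).symm.toLinearMap, ?_⟩
      ext x
      rw [hT, LinearMap.comp_apply]
      have : (ε.quotKerEquivOfSurjective hε).symm (ε x) = Submodule.Quotient.mk x := by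
        rw [LinearEquiv.symm_apply_eq]; rfl
      rw [LinearEquiv.coe_coe, this]
      rfl
    · rintro _ ⟨g, rfl⟩
      obtain ⟨θ, hθ⟩ := Module.projective_lifting_property mk (g ∘ₗ ε) hmk
      have hθ' : ∀ x, mk (θ x) = g (ε x) := fun x => LinearMap.congr_fun hθ x
      obtain ⟨φ, hφ⟩ := div_linear ha (θ ∘ₗ d₁) (fun y => by
        rw [← hmk0, LinearMap.comp_apply, hθ', (h₀ _).2 ⟨y, rfl⟩, map_zero])
      obtain ⟨z, hz⟩ := (hr φ).2 (by
        ext w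
        apply mul_left_cancel₀ ha
        rw [LinearMap.comp_apply, ← hφ, LinearMap.comp_apply, (h₁ _).2 ⟨w, rfl⟩]
        simp)
      refine ⟨z, ?_⟩
      ext x
      rw [hΦ, hT, ← hθ', hz]
      congr 1
      apply mul_left_cancel₀ ha
      rw [← hφ, LinearMap.comp_apply, hh, map_smul, smul_eq_mul]
  exact ⟨(Submodule.quotEquivOfEq _ _ hker.symm).trans <| Φ.quotKerEquivRange.trans <|
    (LinearEquiv.ofEq _ _ hrange).trans (LinearEquiv.ofInjective T hTinj).symm⟩

theorem ext_equiv {R : Type} [CommRing R] [IsDomain R] {a : R} (ha : a ≠ 0)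
    (N : Type) [AddCommGroup N] [Module R N] (haN : ∀ x : N, a • x = 0) :
    Nonempty (extModule R N R 1 ≃ₗ[R] (N →ₗ[R] (R ⧸ Ideal.span {a}))) := by
  let Pr := ProjectiveResolution.of (ModuleCat.of R N)
  let K := Pr.complex.linearYonedaObj R (ModuleCat.of R R)
  let e1 : extModule R N R 1 ≅ K.homology 1 := Pr.isoExt 1 (ModuleCat.of R R)
  let S := K.sc' 0 1 2
  let e2 : K.homology 1 ≅ S.homology :=
    ShortComplex.homologyMapIso (K.isoSc' 0 1 2 (by simp) (by simp))
  let e3 := S.moduleCatHomologyIso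
  let e := (e1 ≪≫ e2 ≪≫ e3).toLinearEquiv
  have hproj : Module.Projective R (Pr.complex.X 0) :=
    (IsProjective.iff_projective (Pr.complex.X 0)).2 (Pr.projective 0)
  have h1 : Function.Exact (Pr.complex.d 2 1).hom (Pr.complex.d 1 0).hom :=
    (ShortComplex.ShortExact.moduleCat_exact_iff_function_exact _).1 (Pr.exact_succ 0)
  have h0 : Function.Exact (Pr.complex.d 1 0).hom (Pr.π.f 0).hom :=
    (ShortComplex.ShortExact.moduleCat_exact_iff_function_exact _).1 Pr.exact₀
  have hε : Function.Surjective (Pr.π.f 0).hom :=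
    (ModuleCat.epi_iff_surjective (Pr.π.f 0)).1 inferInstance
  let u : LinearMap.ker S.g.hom →ₗ[R] (Pr.complex.X 1 →ₗ[R] R) :=
    { toFun := fun z => ModuleCat.Hom.hom (show Pr.complex.X 1 ⟶ ModuleCat.of R R from z.1)
      map_add' := fun _ _ => rfl
      map_smul' := fun _ _ => rfl }
  have hex := ext_concrete (N := N) ha haN (Pr.complex.d 2 1).hom (Pr.complex.d 1 0).hom
    (Pr.π.f 0).hom h1 h0 hε (LinearMap.range S.moduleCatToCycles) u (by
    intro φ
    constructor
    · rintro ⟨⟨z, hz⟩, rfl⟩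
      have : Pr.complex.d 2 1 ≫ (show Pr.complex.X 1 ⟶ ModuleCat.of R R from z) = 0 := hz
      exact congrArg ModuleCat.Hom.hom this
    · intro h
      refine ⟨⟨ModuleCat.ofHom φ, ?_⟩, rfl⟩
      have : Pr.complex.d 2 1 ≫ ModuleCat.ofHom φ = 0 := ModuleCat.hom_ext h
      exact this
   ) (by
    rintro ⟨z, hz⟩
    constructor
    · rintro ⟨ψ, hψ⟩
      refine ⟨ModuleCat.Hom.hom (show Pr.complex.X 0 ⟶ ModuleCat.of R R from ψ), ?_⟩
      have : Pr.complex.d 1 0 ≫ (show Pr.complex.X 0 ⟶ ModuleCat.of R R from ψ) = z :=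
        congrArg Subtype.val hψ
      exact (congrArg ModuleCat.Hom.hom this).symm
    · rintro ⟨ψ, hψ⟩
      refine ⟨ModuleCat.ofHom ψ, Subtype.ext ?_⟩
      have : Pr.complex.d 1 0 ≫ ModuleCat.ofHom ψ =
        (show Pr.complex.X 1 ⟶ ModuleCat.of R R from z) := ModuleCat.hom_ext hψ.symm
      exact this
   )
  obtain ⟨e'⟩ := hex
  exact ⟨e.trans e'⟩

end PartC

section Final

theorem reflexive_main {R : Type} [CommRing R] [IsDomain R] [IsNoetherianRing R]
    [IsIntegrallyClosed R] (M : Type) [AddCommGroup M] [Module R M] [Module.Finite R M]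
    (htors : Module.IsTorsion R M) :
    ∃ f : M →ₗ[R] (extModule R (extModule R M R 1) R 1),
      IsPseudoNull R (LinearMap.ker f) ∧
      IsPseudoNull R ((extModule R (extModule R M R 1) R 1) ⧸ LinearMap.range f) := by
  obtain ⟨a, haM, ha⟩ := Submodule.annihilator_top_inter_nonZeroDivisors htors
  have ha0 : a ≠ 0 := nonZeroDivisors.ne_zero ha
  have haM : ∀ x : M, a • x = 0 := fun x => Submodule.mem_annihilator.1 haM x trivial
  obtain ⟨e₁⟩ := ext_equiv ha0 M haM
  obtain ⟨e₂⟩ := ext_equiv ha0 (extModule R M R 1) (by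
    intro x
    apply e₁.injective
    rw [map_smul, map_zero]
    ext m
    rw [LinearMap.smul_apply, ← map_smul, haM, map_zero, LinearMap.zero_apply])
  let ev : M →ₗ[R] ((extModule R M R 1) →ₗ[R] (R ⧸ Ideal.span {a})) :=
    { toFun := fun m => (LinearMap.applyₗ m) ∘ₗ e₁.toLinearMap
      map_add' := fun m m' => by ext x; simp
      map_smul' := fun c m => by ext x; simp }
  have hev : ∀ m x, ev m x = e₁ x m := fun m x => rfl
  refine ⟨e₂.symm.toLinearMap ∘ₗ ev, ?_, ?_⟩
  · intro P hP hht
    rw [LocalizedModule.subsingleton_iff]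
    rintro ⟨m, hm⟩
    have hm' : ev m = 0 := by
      apply e₂.symm.injective
      rw [map_zero]; exact hm
    obtain ⟨s, hs, hsm⟩ := ev_ker (P := P) (locPrin_of_height P hP hht) ha0 haM m (by
      intro φ
      have := LinearMap.congr_fun hm' (e₁.symm φ)
      rwa [hev, e₁.apply_symm_apply] at this)
    exact ⟨s, hs, Subtype.ext hsm⟩
  · intro P hP hht
    rw [LocalizedModule.subsingleton_iff]
    intro q
    obtain ⟨y, rfl⟩ := Submodule.Quotient.mk_surjective _ q
    obtain ⟨s, hs, x, hx⟩ := ev_coker (P := P) (N := M) (locPrin_of_height P hP hht) ha0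
      (e₂ y ∘ₗ e₁.symm.toLinearMap)
    refine ⟨s, hs, ?_⟩
    rw [← Submodule.Quotient.mk_smul, Submodule.Quotient.mk_eq_zero]
    refine ⟨x, ?_⟩
    rw [LinearMap.comp_apply, LinearEquiv.coe_coe, LinearEquiv.symm_apply_eq]
    ext w
    rw [hev, ← hx (e₁ w)]
    simp

end Final

/-- For Λ = ℤ_p[[T₁,…,T_d]] and M a finitely generated torsion Λ-module,
there is a pseudo-isomorphism M → Ext^1_Λ(Ext^1_Λ(M,Λ),Λ). -/
theorem stmt_7 (p : ℕ) [Fact p.Prime] (d : ℕ) (hd : 1 ≤ d)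
    (M : Type) [AddCommGroup M] [Module (MvPowerSeries (Fin d) ℤ_[p]) M]
    [Module.Finite (MvPowerSeries (Fin d) ℤ_[p]) M]
    (htors : Module.IsTorsion (MvPowerSeries (Fin d) ℤ_[p]) M) :
    ∃ f : M →ₗ[MvPowerSeries (Fin d) ℤ_[p]]
      (extModule (MvPowerSeries (Fin d) ℤ_[p])
        (extModule (MvPowerSeries (Fin d) ℤ_[p]) M (MvPowerSeries (Fin d) ℤ_[p]) 1)
        (MvPowerSeries (Fin d) ℤ_[p]) 1),
      IsPseudoNull (MvPowerSeries (Fin d) ℤ_[p]) (LinearMap.ker f) ∧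
      IsPseudoNull (MvPowerSeries (Fin d) ℤ_[p])
        ((extModule (MvPowerSeries (Fin d) ℤ_[p])
          (extModule (MvPowerSeries (Fin d) ℤ_[p]) M (MvPowerSeries (Fin d) ℤ_[p]) 1)
          (MvPowerSeries (Fin d) ℤ_[p]) 1) ⧸ LinearMap.range f) := by
  have : IsDomain (MvPowerSeries (Fin d) ℤ_[p]) := NoZeroDivisors.to_isDomain _
  have : IsIntegrallyClosed (MvPowerSeries (Fin d) ℤ_[p]) :=
    mvPowerSeries_isIntegrallyClosed ℤ_[p] d
  exact reflexive_main M htors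
end
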